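/- Fix ℏ > 0 and n ≥ 1, and fix parameters γ_{n+1} = (γ_{n+1,1},…,γ_{n+1,n+1}) ∈ ℂ^{n+1}. Let γ_n = (γ_{n1},…,γ_{nn}) be pairwise distinct complex numbers such that for all 1 ≤ k ≤ n, 1 ≤ m ≤ n+1, the number (γ_{nk} − γ_{n+1,m})/(iℏ) + 1/2 is not an integer. Then for every λ ∈ ℂ and every function f of γ_n: (ℬ_n(λ)(s_n·f))(γ) = s_n(γ_n,γ_{n+1})·(B_n(λ)f)(γ), where s_n·f denotes the pointwise product γ ↦ s_n(γ_n,γ_{n+1})·f(γ). That is, the Gelfand–Zetlin operator ℬ_n(λ) is conjugate by multiplication by s_n to the QISM operator B_n(λ): B_n(λ) = s_n^{−1}∘ℬ_n(λ)∘s_n. -/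

import Mathlib

open Finset

noncomputable section

/-- The row of Gelfand–Zetlin variables `γ_n = (γ_{n1}, …, γ_{nn})` (indexed by `ℕ`,
relevant for indices `1, …, n`). -/
abbrev Row := ℕ → ℂ

/-- Shift of the single variable `γ_{nj}` by `c`. -/
def rowShift (c : ℂ) (j : ℕ) (g : Row) : Row := fun k => if k = j then g k + c else g k

/-- `ℏ^z := exp(z log ℏ)`. -/
def hpow (ℏ : ℝ) (z : ℂ) : ℂ := Complex.exp (z * (Real.log ℏ : ℂ))

/-- The Gelfand–Zetlin operator `ℬ_n(λ)`, with fixed parameters `t = γ_{n+1}`. -/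
def Bop (ℏ : ℝ) (n : ℕ) (t : Row) (lam : ℂ) (f : Row → ℂ) (g : Row) : ℂ :=
  ∑ j ∈ Icc 1 n,
    (∏ s ∈ (Icc 1 n).erase j, (lam - g s) / (g j - g s)) *
      (∏ r ∈ Icc 1 (n + 1), (g j - t r - Complex.I * ℏ / 2)) *
      f (rowShift (-(Complex.I * ℏ)) j g)

/-- The QISM operator `B_n(λ) = i^{1+n}·Σ_j ∏_{s≠j}((λ−γ_{ns})/(γ_{nj}−γ_{ns}))·e^{−iℏ∂_{γ_{nj}}}`. -/
def BopQISM (ℏ : ℝ) (n : ℕ) (lam : ℂ) (f : Row → ℂ) (g : Row) : ℂ :=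
  Complex.I ^ (1 + n) * ∑ j ∈ Icc 1 n,
    (∏ s ∈ (Icc 1 n).erase j, (lam - g s) / (g j - g s)) *
      f (rowShift (-(Complex.I * ℏ)) j g)

/-- The conjugating factor `s_n(γ_n, γ_{n+1})`, with `t = γ_{n+1}`. -/
def sFun (ℏ : ℝ) (n : ℕ) (t : Row) (g : Row) : ℂ :=
  ∏ k ∈ Icc 1 n, ∏ m ∈ Icc 1 (n + 1),
    hpow ℏ ((g k - t m) / (Complex.I * ℏ) + 1 / 2) *
      Complex.Gamma ((g k - t m) / (Complex.I * ℏ) + 1 / 2)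

lemma aux_one (ℏ : ℝ) (hℏ : 0 < ℏ) (a b : ℂ)
    (h : ∀ z : ℤ, (a - b) / (Complex.I * ℏ) + 1 / 2 ≠ (z : ℂ)) :
    (a - b - Complex.I * ℏ / 2) *
      (hpow ℏ ((a + -(Complex.I * ℏ) - b) / (Complex.I * ℏ) + 1 / 2) *
      Complex.Gamma ((a + -(Complex.I * ℏ) - b) / (Complex.I * ℏ) + 1 / 2)) =
    Complex.I * (hpow ℏ ((a - b) / (Complex.I * ℏ) + 1 / 2) *
      Complex.Gamma ((a - b) / (Complex.I * ℏ) + 1 / 2)) := by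
  have h0 : (ℏ : ℂ) ≠ 0 := by exact_mod_cast hℏ.ne'
  have hI : Complex.I * (ℏ : ℂ) ≠ 0 := mul_ne_zero Complex.I_ne_zero h0
  obtain ⟨w, hw⟩ : ∃ w, w = (a - b) / (Complex.I * ℏ) + 1 / 2 - 1 := ⟨_, rfl⟩
  have e1 : (a - b) / (Complex.I * ℏ) + 1 / 2 = w + 1 := by rw [hw]; ring
  have e2 : (a + -(Complex.I * ℏ) - b) / (Complex.I * ℏ) + 1 / 2 = w := by
    have : (a + -(Complex.I * ℏ) - b) = (a - b) - Complex.I * ℏ := by ring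
    rw [hw, this, sub_div, div_self hI]; ring
  have e3 : a - b - Complex.I * ℏ / 2 = Complex.I * ℏ * w := by
    have : Complex.I * ℏ * w = (Complex.I * ℏ) * ((a - b) / (Complex.I * ℏ)) - Complex.I * ℏ / 2 := by
      rw [hw]; ring
    rw [this, mul_div_cancel₀ _ hI]
  have hw0 : w ≠ 0 := by
    intro hz
    apply h 1
    rw [e1, hz]; simp
  have e4 : hpow ℏ (w + 1) = ℏ * hpow ℏ w := by
    unfold hpow
    rw [add_mul, Complex.exp_add, one_mul, ← Complex.ofReal_exp, Real.exp_log hℏ, mul_comm]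
  rw [e1, e2, e3, e4, Complex.Gamma_add_one w hw0]
  ring

lemma aux_s (ℏ : ℝ) (hℏ : 0 < ℏ) (n : ℕ) (t : Row) (g : Row)
    (ht : ∀ k ∈ Icc 1 n, ∀ m ∈ Icc 1 (n + 1),
      ∀ z : ℤ, (g k - t m) / (Complex.I * ℏ) + 1 / 2 ≠ (z : ℂ)) (j : ℕ) (hj : j ∈ Icc 1 n) :
    (∏ r ∈ Icc 1 (n + 1), (g j - t r - Complex.I * ℏ / 2)) *
      sFun ℏ n t (rowShift (-(Complex.I * ℏ)) j g) = Complex.I ^ (1 + n) * sFun ℏ n t g := by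
  unfold sFun
  rw [← Finset.mul_prod_erase _ _ hj, ← Finset.mul_prod_erase (Icc 1 n) _ hj, ← mul_assoc,
    ← mul_assoc]
  congr 1
  · have hc : Complex.I ^ (1 + n) = ∏ _r ∈ Icc 1 (n + 1), Complex.I := by
      simp [add_comm]
    rw [hc, ← Finset.prod_mul_distrib, ← Finset.prod_mul_distrib]
    refine Finset.prod_congr rfl fun m hm => ?_
    simp only [rowShift, if_true]
    exact aux_one ℏ hℏ _ _ (ht j hj m hm)
  · refine Finset.prod_congr rfl fun k hk => ?_
    simp only [rowShift, if_neg (Finset.ne_of_mem_erase hk)]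

/-- the Gelfand–Zetlin operator `ℬ_n(λ)` is conjugate, by
multiplication by `s_n`, to the QISM operator `B_n(λ)`:
`ℬ_n(λ)(s_n·f) = s_n·(B_n(λ)f)` pointwise. -/
theorem B_conjugate_to_QISM (ℏ : ℝ) (hℏ : 0 < ℏ) (n : ℕ) (hn : 1 ≤ n)
    (t : Row) (g : Row)
    (hg : ∀ j ∈ Icc 1 n, ∀ s ∈ Icc 1 n, j ≠ s → g j ≠ g s)
    (ht : ∀ k ∈ Icc 1 n, ∀ m ∈ Icc 1 (n + 1),
      ∀ z : ℤ, (g k - t m) / (Complex.I * ℏ) + 1 / 2 ≠ (z : ℂ))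
    (lam : ℂ) (f : Row → ℂ) :
    Bop ℏ n t lam (fun h => sFun ℏ n t h * f h) g =
      sFun ℏ n t g * BopQISM ℏ n lam f g := by
  unfold Bop BopQISM
  rw [Finset.mul_sum, Finset.mul_sum]
  refine Finset.sum_congr rfl fun j hj => ?_
  have h := aux_s ℏ hℏ n t g ht j hj
  linear_combination (∏ s ∈ (Icc 1 n).erase j, (lam - g s) / (g j - g s)) *
    f (rowShift (-(Complex.I * ℏ)) j g) * h
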